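/- arXiv:1104.5307 — 4 statements merged into one kernel-verified Lean document; each statement's English description precedes it below -/
import Mathlib

section
/- The set W of all rational norms p ∈ Z such that there exists a sequence (w_k) in N that is Cauchy with respect to p and satisfies limsup_k p(w_k − 2e₀) ≤ 1, limsup_k p(w_k − 2e₁) ≤ 1 and limsup_k p(w_k − 2e₀ − 2e₁) ≤ 1 (i.e. the three closed unit balls around 2e₀, 2e₁, 2e₀ + 2e₁ meet in the completion of (N, p)) is not a Borel subset of Z. -/
/-- `ℚ` is regarded as carrying the *discrete* topology, so that `N → ℚ` carries the
product topology with discrete factors. -/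
instance (priority := high) discreteRatTopology : TopologicalSpace ℚ := ⊥

/-- A rational-valued norm on the ℚ-vector space `N = ℕ →₀ ℚ` of finitely supported
functions from `ℕ` to `ℚ`. -/
structure IsRatNorm (p : (ℕ →₀ ℚ) → ℚ) : Prop where
  nonneg : ∀ v, 0 ≤ p v
  eq_zero_iff : ∀ v, p v = 0 ↔ v = 0
  smul_eq : ∀ (q : ℚ) (v), p (q • v) = |q| * p v
  add_le : ∀ v w, p (v + w) ≤ p v + p w

/-- The Polish space `Z` of all rational norms on `N`, topologized as a subspace of
`N → ℚ` (with `ℚ` discrete). -/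
def Zspace : Type := {p : (ℕ →₀ ℚ) → ℚ // IsRatNorm p}

instance : TopologicalSpace Zspace := instTopologicalSpaceSubtype

/-- A sequence in `N` is Cauchy with respect to the rational norm `p`. -/
def IsCauchyWrt (p : (ℕ →₀ ℚ) → ℚ) (v : ℕ → ℕ →₀ ℚ) : Prop :=
  ∀ ε : ℚ, 0 < ε → ∃ K, ∀ m k, K ≤ m → K ≤ k → p (v m - v k) < ε

/-- The set `W ⊆ Z` of rational norms `p` such that the three closed balls of radius `1`
around `2e₀`, `2e₁` and `2e₀ + 2e₁` have a common point in the completion of `(N, p)`: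
there is a `p`-Cauchy sequence `(w k)` whose distances to the three centers have
`limsup ≤ 1`. -/
def Wset : Set Zspace :=
  {p | ∃ w : ℕ → ℕ →₀ ℚ, IsCauchyWrt p.val w ∧
    Filter.limsup (fun k => ((p.val (w k - Finsupp.single 0 2) : ℚ) : ℝ)) Filter.atTop ≤ 1 ∧
    Filter.limsup (fun k => ((p.val (w k - Finsupp.single 1 2) : ℚ) : ℝ)) Filter.atTop ≤ 1 ∧
    Filter.limsup
      (fun k => ((p.val (w k - Finsupp.single 0 2 - Finsupp.single 1 2) : ℚ) : ℝ))
      Filter.atTop ≤ 1}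

/-!
A tree `T` of finite sequences is turned into a norm on the space of triples `(a, b, x)`, where
`(a, b)` is a point of the plane and `x` is a finitely supported flow on the tree of all finite
sequences. The plane part `max(|a|, |b|, |a + b + c|)`, with `c` the flow into the root, is chosen
so that a point common to the balls must have `a = b = 1` and `c = 1`, at distance exactly `1` from
each center. A second term penalizes lack of conservation and flow outside `T`; the balls leave no
room for it, so in the limit the flow is conserved and supported on `T`; a conserved flow that
enters the root and whose levels, weighted by `2⁻ⁿ`, are summable never dies out, and following it
gives an infinite branch of `T`. Conversely, the unit flow along a branch of `T`, truncated at level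
`n`, violates conservation only at its last node, at cost `2⁻ⁿ`, so the truncations converge to a
common point. Thus the trees without an infinite branch are the preimage of `Wᶜ` under a continuous
map, and by diagonalization these trees do not form an analytic set.
-/

open Filter Topology MeasureTheory PiNat

instance : DiscreteTopology ℚ := ⟨rfl⟩

/-! ### Trees with an infinite branch -/

/-- A set `T` of finite sequences (given by its characteristic function) has an infinite branch
if it contains all initial segments of some infinite sequence. Following `PiNat.res`, finite
sequences are listed with their last entry first. -/
def HasBranch {α : Type*} (T : List α → Bool) : Prop := ∃ y : ℕ → α, ∀ k, T (res y k)

lemma exists_forall_res {α : Type*} {P : List α → Prop} (nil : P [])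
    (cons : ∀ s, P s → ∃ a, P (a :: s)) : ∃ y : ℕ → α, ∀ k, P (res y k) := by
  choose next hnext using cons
  let node (k : ℕ) : {s // P s} := k.rec ⟨[], nil⟩ fun _ s => ⟨next s.1 s.2 :: s.1, hnext s.1 s.2⟩
  let y (k : ℕ) : α := next (node k).1 (node k).2
  refine ⟨y, fun k => ?_⟩
  suffices hres : res y k = (node k).1 from hres ▸ (node k).2
  induction k with
  | zero => rfl
  | succ k ih => rw [res_succ, ih]

/-- The section at `x` of a tree `R` of pairs of sequences of equal length. -/
def treeSection {α β : Type*} (R : List α → List β → Bool) (x : ℕ → α) (t : List β) : Bool :=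
  R (res x t.length) t

lemma hasBranch_treeSection_iff {α β : Type*} {R : List α → List β → Bool} {x : ℕ → α} :
    HasBranch (treeSection R x) ↔ ∃ y, ∀ k, R (res x k) (res y k) := by
  simp only [HasBranch, treeSection, res_length]

instance polishSpace_pi_of_discrete {ι α : Type*} [Countable ι] [Countable α] [TopologicalSpace α]
    [DiscreteTopology α] : PolishSpace (ι → α) :=
  have : TopologicalSpace.IsCompletelyMetrizableSpace (ι → α) := inferInstance
  inferInstance

section SequenceSpace

variable {α : Type*} [TopologicalSpace α]

lemma tendsto_of_forall_res_eq {x : ℕ → ℕ → α} {y : ℕ → α} (h : ∀ k, res (x k) k = res y k) :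
    Tendsto x atTop (𝓝 y) := by
  refine tendsto_pi_nhds.2 fun i => tendsto_nhds_of_eventually_eq ?_
  filter_upwards [eventually_gt_atTop i] with k hk
  exact res_eq_res.1 (h k) hk

lemma exists_hasBranch_treeSection_iff_mem [T2Space α] {A : Set (ℕ → α)}
    (hA : AnalyticSet A) :
    ∃ R : List α → List ℕ → Bool, ∀ x, HasBranch (treeSection R x) ↔ x ∈ A := by
  classical
  simp only [hasBranch_treeSection_iff]
  rw [AnalyticSet] at hA
  obtain rfl | ⟨f, hf, rfl⟩ := hA
  · exact ⟨fun _ _ => false, by simp⟩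
  refine ⟨fun a t => decide (∃ z, res (f z) t.length = a ∧ res z t.length = t), fun x => ?_⟩
  simp only [res_length, decide_eq_true_eq]
  constructor
  · rintro ⟨y, hy⟩
    choose z hfz hz using hy
    exact ⟨y, tendsto_nhds_unique ((hf.tendsto y).comp (tendsto_of_forall_res_eq hz))
      (tendsto_of_forall_res_eq hfz)⟩
  · rintro ⟨y, rfl⟩
    exact ⟨y, fun k => ⟨y, rfl, rfl⟩⟩

variable [DiscreteTopology α]

lemma eventually_res_eq (x : ℕ → α) (n : ℕ) : ∀ᶠ y in 𝓝 x, res y n = res x n := by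
  have h := (isOpen_cylinder (fun _ => α) x n).mem_nhds (self_mem_cylinder x n)
  rwa [cylinder_eq_res] at h

lemma continuous_apply_res (i : List α → ℕ) (n : ℕ) :
    Continuous fun x : ℕ → α => x (i (res x n)) := by
  refine continuous_iff_continuousAt.2 fun x => ?_
  refine (continuous_apply (i (res x n))).continuousAt.congr ?_
  filter_upwards [eventually_res_eq x n] with y hy
  rw [hy]

end SequenceSpace

/-- The section at `x` of the tree of pairs coded by `x` itself. -/
def diagonalSection (x : ℕ → Bool) : List ℕ → Bool :=
  treeSection (fun a t => x (Encodable.encode (a, t))) x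

lemma continuous_diagonalSection : Continuous diagonalSection :=
  continuous_pi fun t => continuous_apply_res (fun a => Encodable.encode (a, t)) t.length

theorem not_analyticSet_setOf_not_hasBranch :
    ¬ AnalyticSet {T : List ℕ → Bool | ¬ HasBranch T} := by
  intro h
  obtain ⟨R, hR⟩ := exists_hasBranch_treeSection_iff_mem (h.preimage continuous_diagonalSection)
  let x : ℕ → Bool := Function.extend Encodable.encode (Function.uncurry R) fun _ => false
  have hx : diagonalSection x = treeSection R x := by
    funext t
    exact Encodable.encode_injective.extend_apply (Function.uncurry R) (fun _ => false)
      (res x t.length, t)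
  have hself := hR x
  rw [← hx] at hself
  exact iff_not_self hself

/-! ### Rational seminorms -/

/-- A rational-valued seminorm on a `ℚ`-vector space. Mathlib's `Seminorm` is real-valued, whereas
the points of `Zspace` take rational values. -/
structure IsRatSeminorm {E : Type*} [AddCommGroup E] [Module ℚ E] (p : E → ℚ) : Prop where
  smul_eq : ∀ (q : ℚ) (v : E), p (q • v) = |q| * p v
  add_le : ∀ v w : E, p (v + w) ≤ p v + p w

/-- The Cauchy sequences of a rational seminorm `p`; on `ℕ →₀ ℚ` this is `IsCauchyWrt p`. -/
def IsCauchySeq {E : Type*} [AddCommGroup E] (p : E → ℚ) (x : ℕ → E) : Prop :=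
  ∀ ε : ℚ, 0 < ε → ∃ K, ∀ m k, K ≤ m → K ≤ k → p (x m - x k) < ε

section Seminorm

variable {E F : Type*} [AddCommGroup E] [Module ℚ E] [AddCommGroup F] [Module ℚ F] {p q : E → ℚ}

namespace IsRatSeminorm

lemma map_zero (hp : IsRatSeminorm p) : p 0 = 0 := by
  simpa using hp.smul_eq 0 0

lemma map_neg (hp : IsRatSeminorm p) (v : E) : p (-v) = p v := by
  simpa using hp.smul_eq (-1) v

lemma nonneg (hp : IsRatSeminorm p) (v : E) : 0 ≤ p v := by
  have h := hp.add_le v (-v)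
  rw [add_neg_cancel, hp.map_zero, hp.map_neg] at h
  linarith

lemma sub_le (hp : IsRatSeminorm p) (v w : E) : p (v - w) ≤ p v + p w := by
  simpa only [sub_eq_add_neg, hp.map_neg] using hp.add_le v (-w)

lemma sum_le (hp : IsRatSeminorm p) {ι : Type*} (s : Finset ι) (v : ι → E) :
    p (∑ i ∈ s, v i) ≤ ∑ i ∈ s, p (v i) :=
  Finset.le_sum_of_subadditive p hp.map_zero.le hp.add_le s v

lemma abs (f : E →ₗ[ℚ] ℚ) : IsRatSeminorm fun v => |f v| where
  smul_eq q v := by rw [map_smul, smul_eq_mul, abs_mul]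
  add_le v w := by simpa only [map_add] using abs_add_le (f v) (f w)

lemma comp {r : F → ℚ} (hr : IsRatSeminorm r) (f : E →ₗ[ℚ] F) :
    IsRatSeminorm fun v => r (f v) where
  smul_eq q v := by rw [map_smul, hr.smul_eq]
  add_le v w := by simpa only [_root_.map_add] using hr.add_le (f v) (f w)

lemma add (hp : IsRatSeminorm p) (hq : IsRatSeminorm q) : IsRatSeminorm fun v => p v + q v where
  smul_eq c v := by rw [hp.smul_eq, hq.smul_eq, mul_add]
  add_le v w := by linarith [hp.add_le v w, hq.add_le v w]

lemma const_mul (hp : IsRatSeminorm p) {c : ℚ} (hc : 0 ≤ c) : IsRatSeminorm fun v => c * p v where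
  smul_eq r v := by rw [hp.smul_eq, mul_left_comm]
  add_le v w := by simpa only [mul_add] using mul_le_mul_of_nonneg_left (hp.add_le v w) hc

lemma max (hp : IsRatSeminorm p) (hq : IsRatSeminorm q) :
    IsRatSeminorm fun v => Max.max (p v) (q v) where
  smul_eq c v := by rw [hp.smul_eq, hq.smul_eq, mul_max_of_nonneg _ _ (abs_nonneg c)]
  add_le v w := max_le
    ((hp.add_le v w).trans (add_le_add (le_max_left _ _) (le_max_left _ _)))
    ((hq.add_le v w).trans (add_le_add (le_max_right _ _) (le_max_right _ _)))

lemma isRatNorm {p : (ℕ →₀ ℚ) → ℚ} (hp : IsRatSeminorm p) (h : ∀ v, p v = 0 → v = 0) :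
    IsRatNorm p :=
  ⟨hp.nonneg, fun v => ⟨h v, fun hv => hv ▸ hp.map_zero⟩, hp.smul_eq, hp.add_le⟩

lemma isCauchySeq_of_le_geometric (hp : IsRatSeminorm p) {x : ℕ → E} {C r : ℚ} (hr : r < 1)
    (hx : ∀ k, p (x (k + 1) - x k) ≤ C * r ^ k) : IsCauchySeq p x := by
  let P : AddGroupSeminorm E :=
    { toFun v := p v
      map_zero' := by rw [hp.map_zero, Rat.cast_zero]
      add_le' v w := mod_cast hp.add_le v w
      neg' v := by rw [hp.map_neg] }
  let _ : SeminormedAddCommGroup E := P.toSeminormedAddCommGroup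
  have hdist (v w : E) : dist v w = (p (v - w) : ℝ) := dist_eq_norm v w
  have hcauchy : CauchySeq x := by
    refine cauchySeq_of_le_geometric (r : ℝ) C (mod_cast hr) fun k => ?_
    rw [dist_comm, hdist]
    exact_mod_cast hx k
  intro ε hε
  obtain ⟨K, hK⟩ := Metric.cauchySeq_iff.1 hcauchy ε (mod_cast hε)
  exact ⟨K, fun m k hm hk => by simpa only [hdist, Rat.cast_lt] using hK m hm k hk⟩

lemma isBoundedUnder_of_isCauchySeq (hp : IsRatSeminorm p) {x : ℕ → E} (hx : IsCauchySeq p x)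
    (v : E) : IsBoundedUnder (· ≤ ·) atTop fun k => (p (x k - v) : ℝ) := by
  obtain ⟨K, hK⟩ := hx 1 one_pos
  refine ⟨(1 + p (x K - v) : ℚ), eventually_map.2 ?_⟩
  filter_upwards [eventually_ge_atTop K] with k hk
  have h := hp.add_le (x k - x K) (x K - v)
  rw [sub_add_sub_cancel] at h
  exact Rat.cast_le.2 (by linarith [hK k K hk le_rfl])

end IsRatSeminorm

lemma IsCauchySeq.map {r : F → ℚ} {x : ℕ → E} (hx : IsCauchySeq p x) (f : E →ₗ[ℚ] F) {C : ℚ}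
    (hC : 0 < C) (h : ∀ v, r (f v) ≤ C * p v) : IsCauchySeq r fun k => f (x k) := by
  intro ε hε
  obtain ⟨K, hK⟩ := hx (ε / C) (div_pos hε hC)
  refine ⟨K, fun m k hm hk => ?_⟩
  rw [← map_sub]
  exact (h _).trans_lt ((lt_div_iff₀' hC).1 (hK m k hm hk))

end Seminorm

-- Limits of rational sequences are taken after casting to `ℝ`, because `ℚ` is discrete here.
lemma tendsto_ratCast_zero_iff {ι : Type*} {l : Filter ι} {u : ι → ℚ} :
    Tendsto (fun i => (u i : ℝ)) l (𝓝 0) ↔ ∀ ε : ℚ, 0 < ε → ∀ᶠ i in l, |u i| < ε := by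
  simp only [Metric.tendsto_nhds, Real.dist_0_eq_abs]
  constructor
  · intro h ε hε
    filter_upwards [h ε (mod_cast hε)] with i hi
    exact_mod_cast hi
  · intro h ε hε
    obtain ⟨δ, hδ, hδε⟩ := exists_rat_btwn hε
    filter_upwards [h δ (mod_cast hδ)] with i hi
    exact lt_trans (mod_cast hi) hδε

/-! ### Weighted `ℓ¹` seminorms -/

section WeightedL1

variable {ι : Type*} {c : ι → ℚ}

/-- The `ℓ¹` seminorm with weights `c` on finitely supported functions. -/
def weightedL1 (c : ι → ℚ) (x : ι →₀ ℚ) : ℚ := x.sum fun i q => c i * |q|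

lemma weightedL1_eq_sum (c : ι → ℚ) {x : ι →₀ ℚ} {s : Finset ι} (h : x.support ⊆ s) :
    weightedL1 c x = ∑ i ∈ s, c i * |x i| :=
  Finsupp.sum_of_support_subset _ h _ (by simp)

lemma weightedL1_single (c : ι → ℚ) (i : ι) (q : ℚ) :
    weightedL1 c (Finsupp.single i q) = c i * |q| :=
  Finsupp.sum_single_index (by simp)

lemma isRatSeminorm_weightedL1 (hc : 0 ≤ c) : IsRatSeminorm (weightedL1 c) where
  smul_eq q x := by
    rw [weightedL1_eq_sum c Finsupp.support_smul, weightedL1_eq_sum c subset_rfl, Finset.mul_sum]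
    refine Finset.sum_congr rfl fun i _ => ?_
    rw [Finsupp.smul_apply, smul_eq_mul, abs_mul, mul_left_comm]
  add_le x y := by
    classical
    rw [weightedL1_eq_sum c Finsupp.support_add, weightedL1_eq_sum c Finset.subset_union_left,
      weightedL1_eq_sum c Finset.subset_union_right, ← Finset.sum_add_distrib]
    refine Finset.sum_le_sum fun i _ => ?_
    rw [Finsupp.add_apply, ← mul_add]
    exact mul_le_mul_of_nonneg_left (abs_add_le _ _) (hc i)

lemma mul_abs_apply_le_weightedL1 (hc : 0 ≤ c) (x : ι →₀ ℚ) (i : ι) :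
    c i * |x i| ≤ weightedL1 c x := by
  classical
  rw [weightedL1_eq_sum c (Finset.subset_insert i x.support)]
  exact Finset.single_le_sum (f := fun i => c i * |x i|)
    (fun j _ => mul_nonneg (hc j) (abs_nonneg _)) (Finset.mem_insert_self _ _)

lemma weightedL1_le_mul {a : ι → ℚ} {C : ℚ} (h : ∀ i, a i ≤ C * c i) (x : ι →₀ ℚ) :
    weightedL1 a x ≤ C * weightedL1 c x := by
  rw [weightedL1, weightedL1, Finsupp.sum, Finsupp.sum, Finset.mul_sum]
  refine Finset.sum_le_sum fun i _ => ?_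
  rw [← mul_assoc]
  exact mul_le_mul_of_nonneg_right (h i) (abs_nonneg _)

lemma abs_linearCombination_le_weightedL1 (hc : 0 ≤ c) (x : ι →₀ ℚ) :
    |Finsupp.linearCombination ℚ c x| ≤ weightedL1 c x := by
  rw [Finsupp.linearCombination_apply]
  refine (Finset.abs_sum_le_sum_abs _ _).trans (Finset.sum_le_sum fun i _ => ?_)
  simp only [smul_eq_mul, abs_mul, abs_of_nonneg (hc i), mul_comm, le_refl]

lemma weightedL1_le_sum_support_add (hc : 0 ≤ c) (x y : ι →₀ ℚ) :
    weightedL1 c x ≤ ∑ i ∈ y.support, c i * |x i| + weightedL1 c (x - y) := by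
  classical
  have hterm (i : ι) : 0 ≤ c i * |(x - y) i| := mul_nonneg (hc i) (abs_nonneg _)
  rw [weightedL1_eq_sum c (Finset.subset_union_right (s₁ := y.support)),
    weightedL1_eq_sum c (Finsupp.support_sub.trans (Finset.union_comm _ _).subset),
    ← Finset.union_sdiff_self_eq_union, Finset.sum_union Finset.disjoint_sdiff,
    Finset.sum_union Finset.disjoint_sdiff]
  have hsdiff : ∑ i ∈ x.support \ y.support, c i * |x i| =
      ∑ i ∈ x.support \ y.support, c i * |(x - y) i| := by
    refine Finset.sum_congr rfl fun i hi => ?_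
    rw [Finsupp.sub_apply, Finsupp.notMem_support_iff.1 (Finset.mem_sdiff.1 hi).2, sub_zero]
  rw [hsdiff]
  linarith [Finset.sum_nonneg fun i (_ : i ∈ y.support) => hterm i]

lemma tendsto_apply_of_tendsto_weightedL1 (hc : 0 ≤ c) {κ : Type*} {l : Filter κ}
    {x : κ → ι →₀ ℚ} (hx : Tendsto (fun k => (weightedL1 c (x k) : ℝ)) l (𝓝 0)) {i : ι}
    (hi : c i ≠ 0) : Tendsto (fun k => (x k i : ℝ)) l (𝓝 0) := by
  have hci : 0 < c i := (hc i).lt_of_ne' hi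
  refine squeeze_zero_norm (a := fun k => (c i : ℝ)⁻¹ * weightedL1 c (x k)) (fun k => ?_)
    (by simpa using hx.const_mul (c i : ℝ)⁻¹)
  have h : |x k i| ≤ (c i)⁻¹ * weightedL1 c (x k) :=
    (le_inv_mul_iff₀ hci).2 (mul_abs_apply_le_weightedL1 hc (x k) i)
  rw [Real.norm_eq_abs]
  exact_mod_cast h

lemma tendsto_weightedL1_of_tendsto_apply (hc : 0 ≤ c) {x : ℕ → ι →₀ ℚ}
    (hx : IsCauchySeq (weightedL1 c) x)
    (h : ∀ i, c i ≠ 0 → Tendsto (fun k => (x k i : ℝ)) atTop (𝓝 0)) :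
    Tendsto (fun k => (weightedL1 c (x k) : ℝ)) atTop (𝓝 0) := by
  have hterm (i : ι) : Tendsto (fun k => (c i : ℝ) * |(x k i : ℝ)|) atTop (𝓝 0) := by
    rcases eq_or_ne (c i) 0 with hi | hi
    · simp [hi]
    · simpa using (h i hi).abs.const_mul (c i : ℝ)
  refine tendsto_ratCast_zero_iff.2 fun ε hε => ?_
  obtain ⟨K, hK⟩ := hx (ε / 2) (half_pos hε)
  have hsum : Tendsto (fun k => ((∑ i ∈ (x K).support, c i * |x k i| : ℚ) : ℝ)) atTop (𝓝 0) := by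
    simpa using tendsto_finsetSum (x K).support fun i _ => hterm i
  filter_upwards [tendsto_ratCast_zero_iff.1 hsum (ε / 2) (half_pos hε), eventually_ge_atTop K]
    with k hk hKk
  rw [abs_of_nonneg ((isRatSeminorm_weightedL1 hc).nonneg _)]
  linarith [le_abs_self (∑ i ∈ (x K).support, c i * |x k i|), hK k K hKk le_rfl,
    weightedL1_le_sum_support_add hc (x k) (x K)]

end WeightedL1

/-! ### Flows on the tree of finite sequences -/

section Flow

variable {α : Type*}

/-- The divergence of a unit flow along the edge entering the node `s` from its parent; the edge
entering the root `[]` has no source. -/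
noncomputable def boundary : List α → List α →₀ ℚ
  | [] => Finsupp.single [] 1
  | a :: s => Finsupp.single (a :: s) 1 - Finsupp.single s 1

/-- The divergence of a flow `x` on the tree of finite sequences, where `x s` is the flow along the
edge entering the node `s`. Its value at `s` is the flow into `s` minus the flow out of `s`. -/
noncomputable def divergence : (List α →₀ ℚ) →ₗ[ℚ] List α →₀ ℚ :=
  Finsupp.linearCombination ℚ boundary

/-- The characteristic function of the set of children of `s`. -/
noncomputable def childWeight (s : List α) : List α → ℚ := (Set.range (· :: s)).indicator 1

/-- The weight `2⁻ⁿ` on the `n`-th level of the tree of finite sequences. -/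
def levelWeight (s : List α) : ℚ := (1 / 2) ^ s.length

lemma childWeight_nonneg (s : List α) : 0 ≤ childWeight s :=
  fun _ => Set.indicator_apply_nonneg fun _ => zero_le_one

lemma levelWeight_pos (s : List α) : 0 < levelWeight s := pow_pos one_half_pos _

lemma levelWeight_nonneg : 0 ≤ (levelWeight : List α → ℚ) := fun s => (levelWeight_pos s).le

lemma childWeight_le (s t : List α) : childWeight s t ≤ 2 * (levelWeight s)⁻¹ * levelWeight t := by
  have hs := levelWeight_pos s
  have ht := levelWeight_pos t
  refine Set.indicator_apply_le' ?_ fun _ => by positivity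
  rintro ⟨a, rfl⟩
  have hcons : levelWeight (a :: s) = levelWeight s * (1 / 2) := pow_succ _ _
  rw [hcons, Pi.one_apply]
  exact (by field_simp : (1 : ℚ) = _).le

lemma sub_divergence_apply (x : List α →₀ ℚ) (s : List α) :
    x s - divergence x s = Finsupp.linearCombination ℚ (childWeight s) x := by
  classical
  induction x using Finsupp.induction_linear with
  | zero => simp
  | add x y hx hy => simp only [map_add, Finsupp.add_apply, ← hx, ← hy]; ring
  | single t q =>
    simp only [divergence, Finsupp.linearCombination_single, Finsupp.smul_apply, smul_eq_mul]
    cases t with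
    | nil => simp [boundary, childWeight, Finsupp.single_apply]
    | cons a t =>
      simp only [boundary, childWeight, Finsupp.sub_apply, Finsupp.single_apply, Set.indicator,
        Set.mem_range, List.cons.injEq, Pi.one_apply]
      by_cases hs : a :: t = s <;> by_cases ht : t = s <;> simp [hs, ht, Ne.symm]

lemma abs_apply_le_divergence_add (x : List α →₀ ℚ) (s : List α) :
    |x s| ≤ |divergence x s| + weightedL1 (childWeight s) x := by
  have h := abs_linearCombination_le_weightedL1 (childWeight_nonneg s) x
  rw [← sub_divergence_apply] at h
  linarith [abs_sub_abs_le_abs_sub (x s) (divergence x s)]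

-- If the flow into every child vanishes in the limit, then so does the whole outflow of `s`: being
-- Cauchy prevents the flow from escaping through ever new children.
lemma exists_not_tendsto_cons {x : ℕ → List α →₀ ℚ} (hx : IsCauchySeq (weightedL1 levelWeight) x)
    {s : List α} (hdiv : Tendsto (fun k => (divergence (x k) s : ℝ)) atTop (𝓝 0))
    (hs : ¬ Tendsto (fun k => (x k s : ℝ)) atTop (𝓝 0)) :
    ∃ a, ¬ Tendsto (fun k => (x k (a :: s) : ℝ)) atTop (𝓝 0) := by
  by_contra! hchild
  have hcauchy : IsCauchySeq (weightedL1 (childWeight s)) x :=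
    hx.map LinearMap.id (by have := levelWeight_pos s; positivity)
      (weightedL1_le_mul (childWeight_le s))
  have hout : Tendsto (fun k => (weightedL1 (childWeight s) (x k) : ℝ)) atTop (𝓝 0) := by
    refine tendsto_weightedL1_of_tendsto_apply (childWeight_nonneg s) hcauchy fun t ht => ?_
    obtain ⟨a, rfl⟩ := Set.mem_of_indicator_ne_zero ht
    exact hchild a
  refine hs (squeeze_zero_norm (fun k => ?_) (by simpa using hdiv.abs.add hout))
  rw [Real.norm_eq_abs]
  exact_mod_cast abs_apply_le_divergence_add (x k) s

/-- The characteristic function of the complement of `T`. -/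
def offWeight (T : List α → Bool) (s : List α) : ℚ := if T s then 0 else 1

lemma offWeight_nonneg (T : List α → Bool) : 0 ≤ offWeight T :=
  fun s => by unfold offWeight; split_ifs <;> norm_num

/-- The penalty of a flow, which measures its failure to be conserved and to be supported
on `T`. -/
noncomputable def penalty (T : List α → Bool) (x : List α →₀ ℚ) : ℚ :=
  weightedL1 levelWeight (divergence x) + weightedL1 (offWeight T) x

lemma isRatSeminorm_penalty (T : List α → Bool) : IsRatSeminorm (penalty T) :=
  ((isRatSeminorm_weightedL1 levelWeight_nonneg).comp divergence).add
    (isRatSeminorm_weightedL1 (offWeight_nonneg T))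

lemma hasBranch_of_tendsto_penalty {T : List α → Bool} {x : ℕ → List α →₀ ℚ}
    (hx : IsCauchySeq (weightedL1 levelWeight) x)
    (hpenalty : Tendsto (fun k => (penalty T (x k) : ℝ)) atTop (𝓝 0))
    (hroot : ¬ Tendsto (fun k => (x k [] : ℝ)) atTop (𝓝 0)) : HasBranch T := by
  have hdivNonneg (x : List α →₀ ℚ) : 0 ≤ weightedL1 levelWeight (divergence x) :=
    (isRatSeminorm_weightedL1 levelWeight_nonneg).nonneg _
  have hoffNonneg (x : List α →₀ ℚ) : 0 ≤ weightedL1 (offWeight T) x :=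
    (isRatSeminorm_weightedL1 (offWeight_nonneg T)).nonneg _
  have hdiv : Tendsto (fun k => (weightedL1 levelWeight (divergence (x k)) : ℝ)) atTop (𝓝 0) :=
    squeeze_zero (fun k => mod_cast hdivNonneg (x k))
      (fun k => mod_cast le_add_of_nonneg_right (hoffNonneg (x k))) hpenalty
  have hoff : Tendsto (fun k => (weightedL1 (offWeight T) (x k) : ℝ)) atTop (𝓝 0) :=
    squeeze_zero (fun k => mod_cast hoffNonneg (x k))
      (fun k => mod_cast le_add_of_nonneg_left (hdivNonneg (x k))) hpenalty
  obtain ⟨y, hy⟩ := exists_forall_res hroot fun s => exists_not_tendsto_cons hx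
    (tendsto_apply_of_tendsto_weightedL1 levelWeight_nonneg hdiv (levelWeight_pos s).ne')
  refine ⟨y, fun k => ?_⟩
  by_contra hT
  have hweight : offWeight T (res y k) ≠ 0 := by simp [offWeight, hT]
  exact hy k (tendsto_apply_of_tendsto_weightedL1 (offWeight_nonneg T) hoff hweight)

/-- The unit flow from the root along `y` down to level `k`. -/
noncomputable def pathFlow (y : ℕ → α) (k : ℕ) : List α →₀ ℚ :=
  ∑ j ∈ Finset.range (k + 1), Finsupp.single (res y j) 1

lemma pathFlow_succ_sub (y : ℕ → α) (k : ℕ) :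
    pathFlow y (k + 1) - pathFlow y k = Finsupp.single (res y (k + 1)) 1 := by
  rw [pathFlow, Finset.sum_range_succ, ← pathFlow, add_sub_cancel_left]

lemma divergence_single_one (s : List α) : divergence (Finsupp.single s 1) = boundary s := by
  rw [divergence, Finsupp.linearCombination_single, one_smul]

lemma divergence_pathFlow (y : ℕ → α) (k : ℕ) :
    divergence (pathFlow y k) = Finsupp.single (res y k) 1 := by
  induction k with
  | zero => simp [pathFlow, divergence_single_one, boundary]
  | succ k ih =>
    rw [← sub_add_cancel (pathFlow y (k + 1)) (pathFlow y k), map_add, ih, pathFlow_succ_sub,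
      divergence_single_one, res_succ, boundary, sub_add_cancel]

lemma pathFlow_apply_nil (y : ℕ → α) (k : ℕ) : pathFlow y k [] = 1 := by
  rw [pathFlow, Finsupp.finsetSum_apply, Finset.sum_range_succ']
  simp

lemma weightedL1_pathFlow_le {c : List α → ℚ} (hc : 0 ≤ c) (y : ℕ → α) (k : ℕ) :
    weightedL1 c (pathFlow y k) ≤ ∑ j ∈ Finset.range (k + 1), c (res y j) := by
  simpa only [pathFlow, weightedL1_single, abs_one, mul_one] using
    (isRatSeminorm_weightedL1 hc).sum_le (Finset.range (k + 1)) fun j => Finsupp.single (res y j) 1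

lemma levelWeight_res (y : ℕ → α) (k : ℕ) : levelWeight (res y k) = (1 / 2) ^ k := by
  rw [levelWeight, res_length]

lemma weightedL1_levelWeight_pathFlow_le (y : ℕ → α) (k : ℕ) :
    weightedL1 levelWeight (pathFlow y k) ≤ 2 := by
  refine (weightedL1_pathFlow_le levelWeight_nonneg y k).trans ?_
  simp only [levelWeight_res]
  rw [geom_sum_eq (by norm_num), div_le_iff_of_neg (by norm_num)]
  have : (0 : ℚ) < (1 / 2) ^ (k + 1) := by positivity
  linarith

lemma penalty_pathFlow {T : List α → Bool} {y : ℕ → α} (hy : ∀ k, T (res y k)) (k : ℕ) :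
    penalty T (pathFlow y k) = (1 / 2) ^ k := by
  have hoff : weightedL1 (offWeight T) (pathFlow y k) = 0 := by
    refine le_antisymm ((weightedL1_pathFlow_le (offWeight_nonneg T) y k).trans_eq ?_)
      ((isRatSeminorm_weightedL1 (offWeight_nonneg T)).nonneg _)
    exact Finset.sum_eq_zero fun j _ => if_pos (hy j)
  rw [penalty, hoff, divergence_pathFlow, weightedL1_single, levelWeight_res]
  simp

end Flow

/-! ### The norm of a tree -/

section FlowNorm

variable {α : Type*}

/-- A point of the plane together with a flow on the tree of finite sequences. -/
abbrev PlaneFlow (α : Type*) : Type _ := ℚ × ℚ × (List α →₀ ℚ)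

/-- The seminorm `max(|a|, |b|, |a + b + c|)`, where `(a, b)` is the point of the plane and `c` the
flow into the root. -/
def planeNorm (v : PlaneFlow α) : ℚ := max |v.1| (max |v.2.1| |v.1 + v.2.1 + v.2.2 []|)

/-- The norm on `PlaneFlow α` attached to `T`. The second term of the maximum makes the flows of a
Cauchy sequence converge in the `ℓ¹` norm with weights `levelWeight`. -/
noncomputable def flowNorm (T : List α → Bool) (v : PlaneFlow α) : ℚ :=
  max (planeNorm v + penalty T v.2.2) (1 / 2 * weightedL1 levelWeight v.2.2)

/-- The projection onto the flow. -/
noncomputable def flowPart : PlaneFlow α →ₗ[ℚ] List α →₀ ℚ :=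
  LinearMap.snd ℚ ℚ _ ∘ₗ LinearMap.snd ℚ ℚ _

lemma isRatSeminorm_planeNorm : IsRatSeminorm (planeNorm (α := α)) := by
  let fst : PlaneFlow α →ₗ[ℚ] ℚ := LinearMap.fst ℚ ℚ _
  let snd : PlaneFlow α →ₗ[ℚ] ℚ := LinearMap.fst ℚ ℚ _ ∘ₗ LinearMap.snd ℚ ℚ _
  let total : PlaneFlow α →ₗ[ℚ] ℚ := fst + snd + Finsupp.lapply [] ∘ₗ flowPart
  have h : IsRatSeminorm fun v : PlaneFlow α => max |fst v| (max |snd v| |total v|) :=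
    (IsRatSeminorm.abs fst).max ((IsRatSeminorm.abs snd).max (IsRatSeminorm.abs total))
  exact h

lemma isRatSeminorm_flowNorm (T : List α → Bool) : IsRatSeminorm (flowNorm T) :=
  (isRatSeminorm_planeNorm.add ((isRatSeminorm_penalty T).comp flowPart)).max
    (((isRatSeminorm_weightedL1 levelWeight_nonneg).comp flowPart).const_mul one_half_pos.le)

lemma eq_zero_of_flowNorm_eq_zero {T : List α → Bool} {v : PlaneFlow α} (hv : flowNorm T v = 0) :
    v = 0 := by
  have hpenalty : 0 ≤ penalty T v.2.2 := (isRatSeminorm_penalty T).nonneg _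
  have hplane : planeNorm v ≤ 0 :=
    (le_add_of_nonneg_right hpenalty).trans ((le_max_left _ _).trans hv.le)
  have hlevel : weightedL1 levelWeight v.2.2 ≤ 0 := by
    linarith [(le_max_right _ _).trans hv.le]
  have hflow (s : List α) : v.2.2 s = 0 := by
    have h := (mul_abs_apply_le_weightedL1 levelWeight_nonneg v.2.2 s).trans hlevel
    exact abs_nonpos_iff.1 (nonpos_of_mul_nonpos_right h (levelWeight_pos s))
  obtain ⟨h₁, h₂⟩ := max_le_iff.1 hplane
  exact Prod.ext (abs_nonpos_iff.1 h₁)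
    (Prod.ext (abs_nonpos_iff.1 (max_le_iff.1 h₂).1) (Finsupp.ext hflow))

lemma isCauchySeq_flowPart {T : List α → Bool} {u : ℕ → PlaneFlow α}
    (hu : IsCauchySeq (flowNorm T) u) : IsCauchySeq (weightedL1 levelWeight) fun k => (u k).2.2 :=
  hu.map flowPart two_pos fun _ =>
    (inv_mul_le_iff₀ two_pos).1 (one_div (2 : ℚ) ▸ le_max_right _ _)

/-- The balls of radius `1` around `(2, 0, 0)`, `(0, 2, 0)` and `(2, 2, 0)` have a common point in
the completion of the seminorm `p`. -/
def BallsMeet (p : PlaneFlow α → ℚ) : Prop :=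
  ∃ u : ℕ → PlaneFlow α, IsCauchySeq p u ∧
    limsup (fun k => (p (u k - (2, 0, 0)) : ℝ)) atTop ≤ 1 ∧
    limsup (fun k => (p (u k - (0, 2, 0)) : ℝ)) atTop ≤ 1 ∧
    limsup (fun k => (p (u k - (2, 0, 0) - (0, 2, 0)) : ℝ)) atTop ≤ 1

lemma penalty_lt_and_lt_root {T : List α → Bool} {v : PlaneFlow α} {ε : ℚ}
    (h₁ : flowNorm T (v - (2, 0, 0)) < 1 + ε) (h₂ : flowNorm T (v - (0, 2, 0)) < 1 + ε)
    (h₃ : flowNorm T (v - (2, 0, 0) - (0, 2, 0)) < 1 + ε) :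
    penalty T v.2.2 < ε ∧ 1 - 3 * ε < v.2.2 [] := by
  have hpenalty : 0 ≤ penalty T v.2.2 := (isRatSeminorm_penalty T).nonneg _
  simp only [flowNorm, planeNorm, max_lt_iff, max_add, Prod.fst_sub, Prod.snd_sub, sub_zero]
    at h₁ h₂ h₃
  obtain ⟨⟨ha₁, hb₁, -⟩, -⟩ := h₁
  obtain ⟨⟨ha₂, -⟩, -⟩ := h₂
  obtain ⟨⟨-, -, hab₃⟩, -⟩ := h₃
  constructor
  -- `|a| + |a - 2| ≥ 2` leaves less than `ε` for the penalty.
  · linarith [neg_le_abs (v.1 - 2), le_abs_self v.1]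
  · linarith [le_abs_self v.1, le_abs_self v.2.1, neg_le_abs (v.1 - 2 + (v.2.1 - 2) + v.2.2 [])]

lemma hasBranch_of_ballsMeet {T : List α → Bool} (h : BallsMeet (flowNorm T)) : HasBranch T := by
  obtain ⟨u, hu, h₁, h₂, h₃⟩ := h
  have hlt {c : PlaneFlow α} (hc : limsup (fun k => (flowNorm T (u k - c) : ℝ)) atTop ≤ 1)
      {ε : ℚ} (hε : 0 < ε) : ∀ᶠ k in atTop, flowNorm T (u k - c) < 1 + ε := by
    have hc' : limsup (fun k => (flowNorm T (u k - c) : ℝ)) atTop < (1 + ε : ℚ) :=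
      hc.trans_lt (by exact_mod_cast lt_add_of_pos_right 1 hε)
    filter_upwards [eventually_lt_of_limsup_lt hc'
      ((isRatSeminorm_flowNorm T).isBoundedUnder_of_isCauchySeq hu c)] with k hk
    exact_mod_cast hk
  simp only [sub_sub] at h₃
  have hcontrol {ε : ℚ} (hε : 0 < ε) :
      ∀ᶠ k in atTop, penalty T (u k).2.2 < ε ∧ 1 - 3 * ε < (u k).2.2 [] := by
    filter_upwards [hlt h₁ hε, hlt h₂ hε, hlt h₃ hε] with k hk₁ hk₂ hk₃
    exact penalty_lt_and_lt_root hk₁ hk₂ (by rwa [sub_sub])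
  refine hasBranch_of_tendsto_penalty (isCauchySeq_flowPart hu) ?_ fun hroot => ?_
  · refine tendsto_ratCast_zero_iff.2 fun ε hε => ?_
    filter_upwards [hcontrol hε] with k hk
    rw [abs_of_nonneg ((isRatSeminorm_penalty T).nonneg _)]
    exact hk.1
  · obtain ⟨k, hk, hsmall⟩ := ((hcontrol (ε := 1 / 6) (by norm_num)).and
      (tendsto_ratCast_zero_iff.1 hroot (1 / 2) one_half_pos)).exists
    linarith [hk.2, le_abs_self ((u k).2.2 [])]

lemma flowNorm_pathFlow {T : List α → Bool} {y : ℕ → α} (hy : ∀ k, T (res y k)) {a b : ℚ}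
    (hab : max |a| (max |b| |a + b + 1|) = 1) (k : ℕ) :
    flowNorm T (a, b, pathFlow y k) = 1 + (1 / 2) ^ k := by
  have hplane : planeNorm (a, b, pathFlow y k) = 1 := by
    rw [planeNorm, pathFlow_apply_nil, hab]
  rw [flowNorm, hplane, penalty_pathFlow hy, max_eq_left]
  have : (0 : ℚ) < (1 / 2) ^ k := by positivity
  linarith [weightedL1_levelWeight_pathFlow_le y k]

lemma limsup_flowNorm_pathFlow {T : List α → Bool} {y : ℕ → α} (hy : ∀ k, T (res y k)) {a b : ℚ}
    (hab : max |a| (max |b| |a + b + 1|) = 1) :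
    limsup (fun k => (flowNorm T (a, b, pathFlow y k) : ℝ)) atTop = 1 := by
  simp only [flowNorm_pathFlow hy hab]
  refine Tendsto.limsup_eq ?_
  have hpow : Tendsto (fun k : ℕ => (1 / 2 : ℝ) ^ k) atTop (𝓝 0) :=
    tendsto_pow_atTop_nhds_zero_of_lt_one (by norm_num) (by norm_num)
  simpa using hpow.const_add 1

lemma isCauchySeq_pathFlow {T : List α → Bool} {y : ℕ → α} (hy : ∀ k, T (res y k)) (a b : ℚ) :
    IsCauchySeq (flowNorm T) fun k => (a, b, pathFlow y k) := by
  refine (isRatSeminorm_flowNorm T).isCauchySeq_of_le_geometric (C := 2) one_half_lt_one fun k => ?_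
  have hpenalty :
      penalty T (Finsupp.single (res y (k + 1)) 1) ≤ (1 / 2) ^ (k + 1) + (1 / 2) ^ k := by
    rw [← pathFlow_succ_sub, ← penalty_pathFlow hy, ← penalty_pathFlow hy]
    exact (isRatSeminorm_penalty T).sub_le _ _
  have hpow : (0 : ℚ) < (1 / 2) ^ k := by positivity
  rw [Prod.mk_sub_mk, Prod.mk_sub_mk, sub_self, sub_self, pathFlow_succ_sub]
  refine max_le ?_ ?_
  · have hplane : planeNorm (0, 0, Finsupp.single (res y (k + 1)) 1) = 0 := by simp [planeNorm]
    rw [hplane]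
    linarith [pow_succ (1 / 2 : ℚ) k]
  · rw [weightedL1_single, levelWeight_res, abs_one, mul_one]
    linarith [pow_succ (1 / 2 : ℚ) k]

lemma ballsMeet_of_hasBranch {T : List α → Bool} (h : HasBranch T) : BallsMeet (flowNorm T) := by
  obtain ⟨y, hy⟩ := h
  refine ⟨fun k => (1, 1, pathFlow y k), isCauchySeq_pathFlow hy 1 1, ?_, ?_, ?_⟩
  all_goals
    simp only [Prod.mk_sub_mk, sub_zero]
    exact (limsup_flowNorm_pathFlow hy (by norm_num)).le

lemma ballsMeet_flowNorm_iff (T : List α → Bool) : BallsMeet (flowNorm T) ↔ HasBranch T :=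
  ⟨hasBranch_of_ballsMeet, ballsMeet_of_hasBranch⟩

end FlowNorm

/-! ### The space of rational norms -/

lemma isClosed_setOf_isRatNorm : IsClosed {p | IsRatNorm p} := by
  have h : {p | IsRatNorm p} = {p | (∀ v, 0 ≤ p v) ∧ (∀ v, p v = 0 ↔ v = 0) ∧
      (∀ (q : ℚ) v, p (q • v) = |q| * p v) ∧ ∀ v w, p (v + w) ≤ p v + p w} :=
    Set.ext fun p => ⟨fun h => ⟨h.1, h.2, h.3, h.4⟩, fun ⟨h₁, h₂, h₃, h₄⟩ => ⟨h₁, h₂, h₃, h₄⟩⟩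
  simp only [h, Set.ofPred_and, Set.ofPred_forall]
  refine .inter ?_ (.inter ?_ (.inter ?_ ?_))
  · exact isClosed_iInter fun v => (isClosed_discrete {x : ℚ | 0 ≤ x}).preimage (by fun_prop)
  · exact isClosed_iInter fun v =>
      (isClosed_discrete {x : ℚ | x = 0 ↔ v = 0}).preimage (by fun_prop)
  · exact isClosed_iInter fun q => isClosed_iInter fun v =>
      (isClosed_discrete {x : ℚ × ℚ | x.1 = |q| * x.2}).preimage
        (f := fun p : (ℕ →₀ ℚ) → ℚ => (p (q • v), p v)) (by fun_prop)
  · exact isClosed_iInter fun v => isClosed_iInter fun w =>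
      (isClosed_discrete {x : ℚ × ℚ × ℚ | x.1 ≤ x.2.1 + x.2.2}).preimage
        (f := fun p : (ℕ →₀ ℚ) → ℚ => (p (v + w), p v, p w)) (by fun_prop)

instance polishSpace_zspace : PolishSpace Zspace := isClosed_setOf_isRatNorm.polishSpace

/-- The coordinate of `ℕ →₀ ℚ` that stands for the node `s`. The coordinates `0` and `1` are those
of the plane. -/
def nodeIndex (s : List ℕ) : ℕ := Encodable.encode s + 2

lemma nodeIndex_injective : Function.Injective nodeIndex :=
  (add_left_injective 2).comp Encodable.encode_injective

/-- The identification of `ℕ →₀ ℚ` with `PlaneFlow ℕ` given by the two plane coordinates and the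
node coordinates. -/
noncomputable def coordinates : (ℕ →₀ ℚ) →ₗ[ℚ] PlaneFlow ℕ :=
  (Finsupp.lapply 0).prod
    ((Finsupp.lapply 1).prod (Finsupp.lcomapDomain nodeIndex nodeIndex_injective))

lemma coordinates_injective : Function.Injective coordinates := by
  intro x y h
  obtain ⟨h₀, h⟩ := Prod.mk.inj h
  obtain ⟨h₁, hnode⟩ := Prod.mk.inj h
  ext i
  match i with
  | 0 => exact h₀
  | 1 => exact h₁
  | n + 2 =>
    have hn : nodeIndex (Denumerable.ofNat (List ℕ) n) = n + 2 :=
      congrArg (· + 2) (Denumerable.encode_ofNat n)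
    rw [← hn]
    exact DFunLike.congr_fun hnode (Denumerable.ofNat (List ℕ) n)

lemma coordinates_single_zero (q : ℚ) : coordinates (Finsupp.single 0 q) = (q, 0, 0) := by
  have h : 0 ∉ Set.range nodeIndex := by simp [nodeIndex]
  simp [coordinates, Finsupp.comapDomain_single_of_not_mem_range h]

lemma coordinates_single_one (q : ℚ) : coordinates (Finsupp.single 1 q) = (0, q, 0) := by
  have h : 1 ∉ Set.range nodeIndex := by simp [nodeIndex]
  simp [coordinates, Finsupp.comapDomain_single_of_not_mem_range h]

lemma coordinates_mapDomain (x : List ℕ →₀ ℚ) :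
    coordinates (Finsupp.mapDomain nodeIndex x) = (0, 0, x) := by
  refine Prod.ext ?_ (Prod.ext ?_ ?_)
  · exact Finsupp.mapDomain_of_notMem_range x 0 (by simp [nodeIndex])
  · exact Finsupp.mapDomain_of_notMem_range x 1 (by simp [nodeIndex])
  · exact Finsupp.leftInverse_lcomapDomain_mapDomain nodeIndex nodeIndex_injective x

lemma coordinates_surjective : Function.Surjective coordinates := by
  rintro ⟨a, b, x⟩
  refine ⟨Finsupp.single 0 a + Finsupp.single 1 b + Finsupp.mapDomain nodeIndex x, ?_⟩
  simp [coordinates_single_zero, coordinates_single_one, coordinates_mapDomain]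

/-- The norm `flowNorm T` as a point of `Zspace`. -/
noncomputable def treePoint (T : List ℕ → Bool) : Zspace :=
  ⟨fun v => flowNorm T (coordinates v),
    ((isRatSeminorm_flowNorm T).comp coordinates).isRatNorm fun _ hv =>
      (map_eq_zero_iff coordinates coordinates_injective).1 (eq_zero_of_flowNorm_eq_zero hv)⟩

lemma continuous_weightedL1_offWeight {α : Type*} (x : List α →₀ ℚ) :
    Continuous fun T : List α → Bool => weightedL1 (offWeight T) x := by
  refine continuous_finsetSum _ fun s _ => ?_
  exact (continuous_of_discreteTopology (f := fun b : Bool => (if b then 0 else 1) * |x s|)).comp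
    (continuous_apply s)

lemma continuous_treePoint : Continuous treePoint := by
  refine Continuous.subtype_mk (continuous_pi fun v => ?_) _
  exact (continuous_of_discreteTopology (f := fun q : ℚ =>
    max (planeNorm (coordinates v) + (weightedL1 levelWeight (divergence (coordinates v).2.2) + q))
      (1 / 2 * weightedL1 levelWeight (coordinates v).2.2))).comp
    (continuous_weightedL1_offWeight (coordinates v).2.2)

lemma treePoint_mem_Wset_iff (T : List ℕ → Bool) : treePoint T ∈ Wset ↔ HasBranch T := by
  rw [← ballsMeet_flowNorm_iff]
  refine Iff.trans (exists_congr fun w => ?_)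
    (coordinates_surjective.comp_left (α := ℕ)).exists.symm
  simp only [treePoint, IsCauchyWrt, IsCauchySeq, map_sub, coordinates_single_zero,
    coordinates_single_one, Function.comp_apply]

theorem stmt13_general : ¬ AnalyticSet Wsetᶜ := by
  intro h
  have hpreimage : treePoint ⁻¹' Wsetᶜ = {T | ¬ HasBranch T} :=
    Set.ext fun T => not_congr (treePoint_mem_Wset_iff T)
  exact not_analyticSet_setOf_not_hasBranch (hpreimage ▸ h.preimage continuous_treePoint)

/-- The set `W` of norms for which the three closed unit balls around `2e₀`, `2e₁`,
`2e₀ + 2e₁` meet in the completion is not a Borel subset of `Z`. -/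
theorem stmt13 : ¬ @MeasurableSet Zspace (borel Zspace) Wset := by
  borelize Zspace
  exact fun h => stmt13_general h.compl.analyticSet
end

section
/- Let M be a separable real Banach space, let X be a separable metric space, and let ι : M → X be an isometric embedding whose range ι(M) is a closed subset of X. Then there exists a continuous map g : X → M such that g(ι(z)) = z for every z ∈ M; in other words, ι(M) is a retract of X (the map ι ∘ g : X → X is a continuous retraction of X onto ι(M)). -/
/-!
The identity of `M` transports to a continuous map from the closed set `Set.range ι` to `M`, and by
Dugundji's theorem any continuous map `f` from a closed subset `A` of a metric space to a locally
convex space extends. At a point `x` off `A`, choose the value of the extension in the convex hull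
of the values of `f` at those points of `A` whose distance to `x` is at most `2 * infDist x A`.
Locally this convex set contains a constant, because the infimum defining `infDist x A > 0` is
approached up to a factor `< 2`, so a partition of unity yields a continuous choice. The admissible
points of `A` converge to `a ∈ A` as `x` does, and local convexity carries this over to the values.
-/

open Filter Metric Set Topology

theorem tendsto_convexHull_smallSets_nhds (𝕜 : Type*) {E : Type*} [Semiring 𝕜] [PartialOrder 𝕜]
    [AddCommMonoid E] [Module 𝕜 E] [TopologicalSpace E] [LocallyConvexSpace 𝕜 E] (v : E) :
    Tendsto (convexHull 𝕜) (𝓝 v).smallSets (𝓝 v).smallSets := by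
  have hbasis := (LocallyConvexSpace.convex_basis (𝕜 := 𝕜) v).smallSets
  exact (hbasis.tendsto_iff hbasis).2 fun s hs => ⟨s, hs, fun _ ht => convexHull_min ht hs.2⟩

section AlmostNearest

variable {X : Type*} [PseudoMetricSpace X] {A : Set X} {a b x : X}

/-- The points of `A` that are nearest to `x` up to a factor of `2`. They replace the nearest points
of `A`, which need not exist. -/
def almostNearest (A : Set X) (x : X) : Set X :=
  {a ∈ A | dist x a ≤ 2 * infDist x A}

theorem dist_le_of_mem_almostNearest (hb : b ∈ almostNearest A x) (ha : a ∈ A) :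
    dist b a ≤ 3 * dist x a := by
  linarith [hb.2, infDist_le_dist_of_mem (x := x) ha, dist_triangle_left b a x]

theorem tendsto_almostNearest_smallSets (ha : a ∈ A) :
    Tendsto (almostNearest A) (𝓝 a) (𝓝[A] a).smallSets := by
  refine (nhds_basis_ball.tendsto_iff (nhdsWithin_basis_ball (s := A)).smallSets).2 fun ε hε =>
    ⟨ε / 3, by positivity, fun x hx b hb => ⟨?_, hb.1⟩⟩
  have hxa : dist x a < ε / 3 := hx
  have hba : dist b a ≤ 3 * dist x a := dist_le_of_mem_almostNearest hb ha
  exact mem_ball.2 (by linarith)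

theorem exists_eventually_mem_almostNearest (hA : A.Nonempty) (hx : x ∉ closure A) :
    ∃ a, ∀ᶠ y in 𝓝 x, a ∈ almostNearest A y := by
  have hpos : 0 < infDist x A := (infDist_pos_iff_notMem_closure hA).1 hx
  obtain ⟨a, ha, hxa⟩ : ∃ a ∈ A, dist x a < 2 * infDist x A :=
    (infDist_lt_iff hA).1 (by linarith)
  have hdist : ContinuousAt (fun y => dist y a) x := by fun_prop
  have hinf : ContinuousAt (fun y => 2 * infDist y A) x :=
    ((continuous_infDist_pt A).const_mul 2).continuousAt
  exact ⟨a, (hdist.eventually_lt hinf hxa).mono fun _ hy => ⟨ha, hy.le⟩⟩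

end AlmostNearest

section Extension

variable {X E : Type*} [AddCommGroup E] [Module ℝ E] [TopologicalSpace E]

theorem continuousAt_of_mem_convexHull_image_almostNearest [PseudoMetricSpace X]
    [LocallyConvexSpace ℝ E] {A : Set X} {a : X} {f g : X → E} (ha : a ∈ A)
    (hf : ContinuousWithinAt f A a) (hfg : EqOn g f A)
    (hg : ∀ x ∉ A, g x ∈ convexHull ℝ (f '' almostNearest A x)) : ContinuousAt g a := by
  have hvalues : Tendsto (fun x => convexHull ℝ (f '' almostNearest A x)) (𝓝 a)
      (𝓝 (f a)).smallSets :=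
    (tendsto_convexHull_smallSets_nhds ℝ (f a)).comp
      (hf.image_smallSets.comp (tendsto_almostNearest_smallSets ha))
  rw [ContinuousAt, hfg ha, ← nhdsWithin_univ, ← union_compl_self A, nhdsWithin_union]
  exact (hf.congr' (eventually_mem_nhdsWithin.mono fun x hx => (hfg hx).symm)).sup
    ((hvalues.mono_left nhdsWithin_le_nhds).of_smallSets (eventually_mem_nhdsWithin.mono hg))

theorem exists_continuousMap_mem_convexHull_image_almostNearest [PseudoMetricSpace X]
    [ContinuousAdd E] [ContinuousSMul ℝ E] {A : Set X} (hA : IsClosed A) (hne : A.Nonempty)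
    (f : X → E) :
    ∃ s : C((Aᶜ : Set X), E), ∀ x : (Aᶜ : Set X), s x ∈ convexHull ℝ (f '' almostNearest A x) := by
  refine exists_continuous_forall_mem_convex_of_local_const
    (fun x : (Aᶜ : Set X) => convex_convexHull ℝ (f '' almostNearest A x)) fun x => ?_
  obtain ⟨a, ha⟩ :=
    exists_eventually_mem_almostNearest hne (hA.closure_eq.symm ▸ x.2 : (x : X) ∉ closure A)
  exact ⟨f a, (continuousAt_subtype_val.eventually ha).mono fun _ hy =>
    subset_convexHull ℝ _ (mem_image_of_mem f hy)⟩

theorem exists_continuous_eqOn_of_isClosed [TopologicalSpace X]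
    [TopologicalSpace.PseudoMetrizableSpace X] [ContinuousAdd E] [ContinuousSMul ℝ E]
    [LocallyConvexSpace ℝ E] {A : Set X} (hA : IsClosed A) {f : X → E} (hf : ContinuousOn f A) :
    ∃ g : X → E, Continuous g ∧ EqOn g f A := by
  let := TopologicalSpace.pseudoMetrizableSpacePseudoMetric X
  obtain rfl | hne := A.eq_empty_or_nonempty
  · exact ⟨0, continuous_zero, eqOn_empty _ _⟩
  obtain ⟨s, hs⟩ := exists_continuousMap_mem_convexHull_image_almostNearest hA hne f
  let g : X → E := Function.extend Subtype.val s f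
  have hgs : ∀ x : (Aᶜ : Set X), g x = s x := Subtype.val_injective.extend_apply s f
  have hgf : EqOn g f A := fun x hx => Function.extend_apply' s f x fun ⟨y, hy⟩ => y.2 (hy ▸ hx)
  refine ⟨g, continuous_iff_continuousAt.2 fun x => ?_, hgf⟩
  by_cases hx : x ∈ A
  · exact continuousAt_of_mem_convexHull_image_almostNearest hx (hf x hx) hgf
      fun y hy => hgs ⟨y, hy⟩ ▸ hs ⟨y, hy⟩
  · refine (hA.isOpen_compl.isOpenEmbedding_subtypeVal.continuousAt_iff (x := ⟨x, hx⟩)).1 ?_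
    exact (funext hgs : g ∘ Subtype.val = s) ▸ s.continuous.continuousAt

end Extension

theorem stmt16_general {M : Type*} [AddCommGroup M] [Module ℝ M] [TopologicalSpace M]
    [ContinuousAdd M] [ContinuousSMul ℝ M] [LocallyConvexSpace ℝ M]
    {X : Type*} [TopologicalSpace X] [TopologicalSpace.PseudoMetrizableSpace X]
    (ι : M → X) (hι : IsClosedEmbedding ι) :
    ∃ g : X → M, Continuous g ∧ ∀ z : M, g (ι z) = z := by
  have hinv : Function.invFun ι ∘ ι = id := Function.invFun_comp hι.injective
  have hcont : ContinuousOn (Function.invFun ι) (range ι) := by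
    rw [← image_univ, hι.isInducing.continuousOn_image_iff, hinv]
    exact continuousOn_id
  obtain ⟨g, hg, hgι⟩ := exists_continuous_eqOn_of_isClosed hι.isClosed_range hcont
  exact ⟨g, hg, fun z => (hgι (mem_range_self z)).trans (congrFun hinv z)⟩

/-- If a separable real Banach space `M` sits, via an isometric embedding `ι` with closed
range, inside a separable metric space `X`, then there is a continuous `g : X → M` with
`g ∘ ι = id`; i.e. `ι '' M` is a retract of `X` (via `ι ∘ g`). -/
theorem stmt16 {M : Type*} [NormedAddCommGroup M] [NormedSpace ℝ M] [CompleteSpace M]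
    [TopologicalSpace.SeparableSpace M]
    {X : Type*} [MetricSpace X] [TopologicalSpace.SeparableSpace X]
    (ι : M → X) (hι : Isometry ι) (hclosed : IsClosed (Set.range ι)) :
    ∃ g : X → M, Continuous g ∧ ∀ z : M, g (ι z) = z :=
  stmt16_general ι ⟨hι.isEmbedding, hclosed⟩
end

section
/- Let M be a real Banach space. Suppose f_k → f pointwise on ℕ (as functions ℕ → ℝ, all taking nonnegative values) and g_k → g pointwise on ℕ (as functions ℕ → M), and suppose that ᾱ(f, g) is defined and that ᾱ(f_k, g_k) is defined for every k ∈ ℕ. Then ᾱ(f_k, g_k) → ᾱ(f, g) in M as k → ∞. -/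
open Classical

/-- The accumulation operator `ᾱ(f, g)` is defined exactly when some partial sum
`∑_{i=0}^{n} f i` exceeds `1`. -/
def accDefined (f : ℕ → ℝ) : Prop :=
  ∃ n, 1 < ∑ i ∈ Finset.range (n + 1), f i

/-- The accumulation operator: with `n` least such that `∑_{i=0}^{n} f i > 1` and
`λ = 1 - ∑_{i=0}^{n-1} f i`, set `ᾱ(f, g) = ∑_{i=0}^{n-1} f i • g i + λ • g n`
(and junk value `0` when undefined). -/
noncomputable def acc {M : Type*} [NormedAddCommGroup M] [NormedSpace ℝ M]
    (f : ℕ → ℝ) (g : ℕ → M) : M :=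
  if h : accDefined f then
    (∑ i ∈ Finset.range (Nat.find h), f i • g i) +
      (1 - ∑ i ∈ Finset.range (Nat.find h), f i) • g (Nat.find h)
  else 0

/-!
The least index at which the partial sums of `f` exceed `1` does not depend continuously on `f`: it
may jump when a partial sum equals `1`. But `f i` can be cut down to the part of it that still fits
below the level `1`. This cut weight is continuous in `f`, it equals `f i` before the crossing
index and `λ` at it, and it vanishes afterwards because `f ≥ 0`. Hence, as soon as the sum of the
first `N` values exceeds `1`, the operator is the sum of the first `N` vectors with these weights.
This condition on `N` is open in `f`, so the same `N` serves a whole neighbourhood of the limit.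
-/

section CutWeight

open Finset Filter Topology

theorem sum_range_mono_of_nonneg {R : Type*} [AddCommMonoid R] [PartialOrder R]
    [IsOrderedAddMonoid R] {f : ℕ → R} (hf : ∀ i, 0 ≤ f i) :
    Monotone fun n => ∑ i ∈ range n, f i :=
  (sum_mono_set_of_nonneg hf).comp range_mono

/-- The weight that the accumulation operator gives to its `i`-th vector: the part of `f i` that
fits into what the earlier values leave of a total of `1`. It is meant for `0 ≤ f`. -/
noncomputable def accWeight (f : ℕ → ℝ) (i : ℕ) : ℝ :=
  min (f i) (max (1 - ∑ j ∈ range i, f j) 0)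

variable {f : ℕ → ℝ} {i : ℕ}

theorem accWeight_eq_self (h : ∑ j ∈ range (i + 1), f j ≤ 1) : accWeight f i = f i := by
  rw [sum_range_succ] at h
  exact min_eq_left (le_max_of_le_left (by linarith))

theorem accWeight_eq_one_sub_sum (h₁ : ∑ j ∈ range i, f j ≤ 1)
    (h₂ : 1 ≤ ∑ j ∈ range (i + 1), f j) : accWeight f i = 1 - ∑ j ∈ range i, f j := by
  rw [sum_range_succ] at h₂
  rw [accWeight, max_eq_left (sub_nonneg.mpr h₁), min_eq_right (by linarith)]

theorem accWeight_eq_zero (hf : 0 ≤ f i) (h : 1 ≤ ∑ j ∈ range i, f j) : accWeight f i = 0 := by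
  rw [accWeight, max_eq_right (sub_nonpos.mpr h), min_eq_right hf]

theorem continuous_accWeight (i : ℕ) : Continuous fun f : ℕ → ℝ => accWeight f i := by
  unfold accWeight
  fun_prop

variable {M : Type*} [NormedAddCommGroup M] [NormedSpace ℝ M]

theorem acc_eq_of_sum_range_le_one_lt (hf : ∀ i, 0 ≤ f i) (g : ℕ → M) {n : ℕ}
    (hle : ∑ i ∈ range n, f i ≤ 1) (hlt : 1 < ∑ i ∈ range (n + 1), f i) :
    acc f g = ∑ i ∈ range n, f i • g i + (1 - ∑ i ∈ range n, f i) • g n := by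
  have hdef : accDefined f := ⟨n, hlt⟩
  have hfind : Nat.find hdef = n := (Nat.find_eq_iff hdef).mpr
    ⟨hlt, fun _ hm => ((sum_range_mono_of_nonneg hf hm).trans hle).not_gt⟩
  rw [acc, dif_pos hdef, hfind]

theorem acc_eq_sum_accWeight (hf : ∀ i, 0 ≤ f i) (g : ℕ → M) {N : ℕ}
    (hN : 1 < ∑ i ∈ range N, f i) : acc f g = ∑ i ∈ range N, accWeight f i • g i := by
  have hmono := sum_range_mono_of_nonneg hf
  obtain ⟨n, hle, hlt⟩ : ∃ n, ∑ i ∈ range n, f i ≤ 1 ∧ 1 < ∑ i ∈ range (n + 1), f i := by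
    simpa only [not_lt] using Nat.exists_not_and_succ_of_not_zero_of_exists
      (p := fun n => 1 < ∑ i ∈ range n, f i) (by norm_num) ⟨N, hN⟩
  have hnN : n < N := hmono.reflect_lt (hle.trans_lt hN)
  have hbefore : ∀ i ∈ range n, f i • g i = accWeight f i • g i := fun i hi => by
    rw [accWeight_eq_self ((hmono (mem_range.mp hi)).trans hle)]
  have hafter : ∀ i ∈ range N, i ∉ range (n + 1) → accWeight f i • g i = 0 := fun i _ hi => by
    have hni : n + 1 ≤ i := by simpa only [mem_range, not_lt] using hi
    rw [accWeight_eq_zero (hf i) (hlt.le.trans (hmono hni)), zero_smul]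
  calc acc f g = ∑ i ∈ range n, f i • g i + (1 - ∑ i ∈ range n, f i) • g n :=
        acc_eq_of_sum_range_le_one_lt hf g hle hlt
    _ = ∑ i ∈ range n, accWeight f i • g i + accWeight f n • g n := by
        rw [sum_congr rfl hbefore, accWeight_eq_one_sub_sum hle hlt.le]
    _ = ∑ i ∈ range (n + 1), accWeight f i • g i := (sum_range_succ _ n).symm
    _ = ∑ i ∈ range N, accWeight f i • g i := sum_subset (range_mono hnN) hafter

theorem stmt17_general {ι : Type*} {l : Filter ι} {fk : ι → ℕ → ℝ} {g : ℕ → M} {gk : ι → ℕ → M}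
    (hf0 : ∀ i, 0 ≤ f i) (hfk0 : ∀ᶠ k in l, ∀ i, 0 ≤ fk k i)
    (hfconv : ∀ i, Tendsto (fun k => fk k i) l (𝓝 (f i)))
    (hgconv : ∀ i, Tendsto (fun k => gk k i) l (𝓝 (g i))) (hdef : accDefined f) :
    Tendsto (fun k => acc (fk k) (gk k)) l (𝓝 (acc f g)) := by
  obtain ⟨n, hn⟩ := hdef
  have hsum : Tendsto (fun k => ∑ i ∈ range (n + 1), fk k i) l (𝓝 (∑ i ∈ range (n + 1), f i)) :=
    tendsto_finsetSum _ fun i _ => hfconv i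
  have hweight (i : ℕ) : Tendsto (fun k => accWeight (fk k) i) l (𝓝 (accWeight f i)) :=
    ((continuous_accWeight i).tendsto f).comp (tendsto_pi_nhds.mpr hfconv)
  have hacc : (fun k => ∑ i ∈ range (n + 1), accWeight (fk k) i • gk k i) =ᶠ[l]
      fun k => acc (fk k) (gk k) := by
    filter_upwards [hfk0, hsum.eventually_const_lt hn] with k hk0 hk
    exact (acc_eq_sum_accWeight hk0 (gk k) hk).symm
  rw [acc_eq_sum_accWeight hf0 g hn]
  exact (tendsto_finsetSum _ fun i _ => (hweight i).smul (hgconv i)).congr' hacc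

end CutWeight

/-- Continuity of the accumulation operator on its domain: if `f_k → f` and `g_k → g`
pointwise (with all `f`'s nonnegative), `ᾱ(f, g)` is defined and each `ᾱ(f_k, g_k)` is
defined, then `ᾱ(f_k, g_k) → ᾱ(f, g)`. -/
theorem stmt17 {M : Type*} [NormedAddCommGroup M] [NormedSpace ℝ M] [CompleteSpace M]
    (f : ℕ → ℝ) (fk : ℕ → ℕ → ℝ) (g : ℕ → M) (gk : ℕ → ℕ → M)
    (hf0 : ∀ i, 0 ≤ f i) (hfk0 : ∀ k i, 0 ≤ fk k i)
    (hfconv : ∀ i, Filter.Tendsto (fun k => fk k i) Filter.atTop (nhds (f i)))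
    (hgconv : ∀ i, Filter.Tendsto (fun k => gk k i) Filter.atTop (nhds (g i)))
    (hdef : accDefined f) (hdefk : ∀ k, accDefined (fk k)) :
    Filter.Tendsto (fun k => acc (fk k) (gk k)) Filter.atTop (nhds (acc f g)) :=
  stmt17_general hf0 (.of_forall hfk0) hfconv hgconv hdef
end

section
/- Let Y be a complete metric space and y : ℕ → Y a sequence of points. Let (μ_k)_{k∈ℕ} be a sequence of probability distributions on ℕ that is fast converging in Y. Then for any γ, γ' : ℕ → ℕ with μ_k(γ(k)) > 0 and μ_k(γ'(k)) > 0 for all k, the sequences (y_{γ(k)})_k and (y_{γ'(k)})_k both converge in Y and have the same limit. -/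
/-
Let `S k = {n | 0 < μ k n}` be the support of `μ k`. Replacing the single value `γ (k + 1)` by
`γ' (k + 1)` leaves `γ` a selector of the supports, so the bound on consecutive distances along
every selector also bounds `dist (y (γ k)) (y (γ' (k + 1)))`. Summability of the bounds makes
`y ∘ γ` Cauchy, and the mixed bound makes `y ∘ γ'` follow it to the same limit.
-/

open Filter Topology

theorem rel_of_forall_selector_rel {ι : Type*} {α : ι → Type*} {S : ∀ i, Set (α i)} {i j : ι}
    (hij : i ≠ j) {r : α i → α j → Prop} (hr : ∀ γ : ∀ i, α i, (∀ i, γ i ∈ S i) → r (γ i) (γ j))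
    {γ : ∀ i, α i} (hγ : ∀ i, γ i ∈ S i) {b : α j} (hb : b ∈ S j) : r (γ i) b := by
  classical
  have hmem : ∀ k, Function.update γ j b k ∈ S k :=
    (Function.forall_update_iff γ fun k a => a ∈ S k).2 ⟨hb, fun k _ => hγ k⟩
  simpa [hij] using hr _ hmem

theorem tendsto_of_tendsto_of_dist_succ_le {Y : Type*} [PseudoMetricSpace Y] {x x' : ℕ → Y}
    {d : ℕ → ℝ} {l : Y} (hx : Tendsto x atTop (𝓝 l)) (hd : Tendsto d atTop (𝓝 0))
    (hxx' : ∀ k, dist (x k) (x' (k + 1)) ≤ d k) : Tendsto x' atTop (𝓝 l) :=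
  (tendsto_add_atTop_iff_nat 1).1 <|
    hx.congr_dist (squeeze_zero (fun _ => dist_nonneg) hxx' hd)

theorem stmt18_general {α Y : Type*} [PseudoMetricSpace Y] [CompleteSpace Y] (y : α → Y)
    {S : ℕ → Set α} {d : ℕ → ℝ} (hd : Summable d)
    (hS : ∀ γ : ℕ → α, (∀ k, γ k ∈ S k) → ∀ k, dist (y (γ k)) (y (γ (k + 1))) ≤ d k)
    {γ γ' : ℕ → α} (hγ : ∀ k, γ k ∈ S k) (hγ' : ∀ k, γ' k ∈ S k) :
    ∃ l : Y, Tendsto (fun k => y (γ k)) atTop (𝓝 l) ∧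
      Tendsto (fun k => y (γ' k)) atTop (𝓝 l) := by
  have hmixed : ∀ k, dist (y (γ k)) (y (γ' (k + 1))) ≤ d k := fun k =>
    rel_of_forall_selector_rel (r := fun a b => dist (y a) (y b) ≤ d k) k.succ_ne_self.symm
      (fun β hβ => hS β hβ k) hγ (hγ' (k + 1))
  obtain ⟨l, hl⟩ := cauchySeq_tendsto_of_complete (cauchySeq_of_dist_le_of_summable d (hS γ hγ) hd)
  exact ⟨l, hl, tendsto_of_tendsto_of_dist_succ_le hl hd.tendsto_atTop_zero hmixed⟩

/-- If `(μ_k)` is a sequence of probability distributions on `ℕ` that is fast converging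
in a complete metric space `Y` (with respect to the points `y : ℕ → Y`), then for any two
selectors `γ, γ'` with `μ_k (γ k) > 0` and `μ_k (γ' k) > 0` for all `k`, the sequences
`(y (γ k))` and `(y (γ' k))` converge to the same limit. -/
theorem stmt18 {Y : Type*} [MetricSpace Y] [CompleteSpace Y] (y : ℕ → Y)
    (μ : ℕ → ℕ → ℝ)
    (hμ0 : ∀ k n, 0 ≤ μ k n) (hμ1 : ∀ k, HasSum (μ k) 1)
    (hfast : ∀ γ : ℕ → ℕ, (∀ k, 0 < μ k (γ k)) →
      ∀ k, dist (y (γ k)) (y (γ (k + 1))) ≤ ((2 : ℝ) ^ k)⁻¹)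
    (γ γ' : ℕ → ℕ) (hγ : ∀ k, 0 < μ k (γ k)) (hγ' : ∀ k, 0 < μ k (γ' k)) :
    ∃ l : Y, Filter.Tendsto (fun k => y (γ k)) Filter.atTop (nhds l) ∧
      Filter.Tendsto (fun k => y (γ' k)) Filter.atTop (nhds l) :=
  stmt18_general y (S := fun k => {n | 0 < μ k n}) (by simpa using summable_geometric_two)
    hfast hγ hγ'
end
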